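/- arXiv:1102.0839 — 3 statements merged into one kernel-verified Lean document; each statement's English description precedes it below -/
import Mathlib

section
/- Let K be a field of characteristic 0, let n ≥ 1, let A and B be n×n integer matrices, and let β ∈ K. Let v, w : Fin n → K be row eigenvectors of A and B respectively for β, i.e., ∑_i v_i A_{ij} = β v_j and ∑_i w_i B_{ij} = β w_j for all j (integer entries viewed in K via the canonical ring homomorphism). Assume the components w_1, …, w_n are linearly independent over ℚ. If γ ∈ K and C is an n×n matrix with rational entries such that γ v_j = ∑_i w_i C_{ij} for all j (i.e., γv = wC), then CA = BC. -/
/-!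
Both products act in the same way on `w`: `w(CA) = (γv)A = γβv` and `w(BC) = (βw)C = βγv`.
A rational matrix is determined by its action on a row vector whose components are linearly
independent over `ℚ`, so `CA = BC`.
-/

open Matrix

/-- Each column of `M - N` is a rational linear relation between the components of `w`,
hence vanishes. -/
theorem eq_of_vecMul_map_ratCast_eq {K : Type*} [Field K] [CharZero K] {n : ℕ} {w : Fin n → K}
    (hw : LinearIndependent ℚ w) {M N : Matrix (Fin n) (Fin n) ℚ}
    (h : w ᵥ* M.map (Rat.cast : ℚ → K) = w ᵥ* N.map (Rat.cast : ℚ → K)) : M = N := by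
  ext i j
  refine sub_eq_zero.mp (Fintype.linearIndependent_iff.mp hw (fun k => M k j - N k j) ?_ i)
  have hj := congrFun h j
  simp only [vecMul, dotProduct, map_apply] at hj
  simp only [Rat.smul_def, Rat.cast_sub, mul_comm _ (w _), mul_sub, Finset.sum_sub_distrib]
  exact sub_eq_zero.mpr hj

/-- Let `K` be a field of characteristic 0, `A, B` `n×n` integer matrices, `β ∈ K`,
and `v, w` row eigenvectors of `A` and `B` for `β` with the components of `w`
linearly independent over `ℚ`. If `γ ∈ K` and `C` is a rational matrix with
`γv = wC`, then `CA = BC`. -/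
theorem semiconjugacy_of_eigenvector_relation (K : Type*) [Field K] [CharZero K]
    {n : ℕ} (hn : 1 ≤ n) (A B : Matrix (Fin n) (Fin n) ℤ) (β : K) (v w : Fin n → K)
    (hv : v ᵥ* (A.map (Int.cast : ℤ → K)) = β • v)
    (hw : w ᵥ* (B.map (Int.cast : ℤ → K)) = β • w)
    (hwli : LinearIndependent ℚ w)
    (γ : K) (C : Matrix (Fin n) (Fin n) ℚ)
    (hC : γ • v = w ᵥ* (C.map (Rat.cast : ℚ → K))) :
    C * A.map (Int.cast : ℤ → ℚ) = B.map (Int.cast : ℤ → ℚ) * C := by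
  have map_intCast (X : Matrix (Fin n) (Fin n) ℤ) :
      (X.map (Int.cast : ℤ → ℚ)).map (Rat.cast : ℚ → K) = X.map (Int.cast : ℤ → K) := by
    ext i j
    simp
  have map_mul_ratCast (X Y : Matrix (Fin n) (Fin n) ℚ) :
      (X * Y).map (Rat.cast : ℚ → K) = X.map (Rat.cast : ℚ → K) * Y.map (Rat.cast : ℚ → K) :=
    Matrix.map_mul (f := Rat.castHom K)
  apply eq_of_vecMul_map_ratCast_eq hwli
  rw [map_mul_ratCast, map_mul_ratCast, map_intCast, map_intCast, ← vecMul_vecMul,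
    ← vecMul_vecMul, hw, ← hC, smul_vecMul, hv, smul_vecMul, ← hC, smul_comm]
end

section
/- Let K be a field, let n ≥ 1, let A be an n×n integer matrix, and let β ∈ K. Let u : Fin n → K satisfy the column eigenvector relation ∑_j A_{ij} u_j = β u_i for all i (integer entries viewed in K). Assume u_1, …, u_n are linearly independent over ℤ, and let I denote the ℤ-submodule of K spanned by u_1, …, u_n. Then for every g ∈ ℤ[x], the pairing m ↦ ∑_i m_i u_i induces a well-defined additive group isomorphism from ℤ^n/ℤ^n g(A) onto I/g(β)I which carries the class of mA to the class of β·(∑_i m_i u_i); in particular it intertwines the endomorphism induced by the right action of A with multiplication by β. -/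
/-!
The pairing `m ↦ ∑ mᵢuᵢ` is the coordinate isomorphism `e : ℤ^n ≃ I` attached to the basis `u` of
`I`. The eigenvector relation gives `e (mA) = β · e m`, hence by induction on `g` also
`e (m g(A)) = g(β) · e m` (`sum_vecMul_aeval`). So `e` maps `ℤ^n g(A)` exactly onto `g(β)I`, and
passes to an isomorphism of the quotients.
-/

open Matrix Polynomial

/-- Right multiplication of integer row vectors by a matrix, as an additive homomorphism. -/
def rmul {n : ℕ} (M : Matrix (Fin n) (Fin n) ℤ) : (Fin n → ℤ) →+ (Fin n → ℤ) :=
  AddMonoidHom.mk' (fun m => m ᵥ* M) (fun a b => Matrix.add_vecMul M a b)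

/-- For `c ∈ K` and a `ℤ`-submodule `I` of `K`, the additive subgroup `cI = {cx : x ∈ I}`
of `I`. -/
def scaleSub {K : Type*} [Field K] (c : K) (I : Submodule ℤ K) : AddSubgroup I where
  carrier := {x | ∃ y ∈ I, (x : K) = c * y}
  zero_mem' := ⟨0, I.zero_mem, by simp⟩
  add_mem' := by
    rintro x y ⟨p, hp, hx⟩ ⟨q, hq, hy⟩
    exact ⟨p + q, I.add_mem hp hq, by push_cast [hx, hy]; ring⟩
  neg_mem' := by
    rintro x ⟨p, hp, hx⟩
    exact ⟨-p, I.neg_mem hp, by push_cast [hx]; ring⟩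

lemma sum_vecMul {K : Type*} [Field K] {n : ℕ} {A : Matrix (Fin n) (Fin n) ℤ} {β : K}
    {u : Fin n → K} (hu : (A.map (Int.cast : ℤ → K)) *ᵥ u = β • u) (m : Fin n → ℤ) :
    ∑ i, (m ᵥ* A) i • u i = β * ∑ i, m i • u i := by
  have key : ∀ j, ∑ i, (A j i : K) * u i = β * u j := fun j => by
    simpa [Matrix.mulVec, dotProduct] using congrFun hu j
  simp only [Matrix.vecMul, dotProduct, zsmul_eq_mul, Int.cast_sum, Int.cast_mul,
    Finset.sum_mul, Finset.mul_sum]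
  rw [Finset.sum_comm]
  refine Finset.sum_congr rfl fun j _ => ?_
  simp only [mul_assoc]
  rw [← Finset.mul_sum, key]
  ring

lemma sum_vecMul_aeval {K : Type*} [Field K] {n : ℕ} {A : Matrix (Fin n) (Fin n) ℤ} {β : K}
    {u : Fin n → K} (hu : (A.map (Int.cast : ℤ → K)) *ᵥ u = β • u) (g : Polynomial ℤ)
    (m : Fin n → ℤ) :
    ∑ i, (m ᵥ* aeval A g) i • u i = aeval β g * ∑ i, m i • u i := by
  induction g using Polynomial.induction_on' generalizing m with
  | add p q hp hq =>
    simp only [map_add, Matrix.vecMul_add, Pi.add_apply, add_smul, Finset.sum_add_distrib,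
      hp, hq, add_mul]
  | monomial k a =>
    have hpow : ∀ (k : ℕ) (m : Fin n → ℤ),
        ∑ i, (m ᵥ* A ^ k) i • u i = β ^ k * ∑ i, m i • u i := by
      intro k
      induction k with
      | zero => simp
      | succ k ih =>
        intro m
        rw [pow_succ, ← Matrix.vecMul_vecMul, sum_vecMul hu, ih]
        ring
    rw [aeval_monomial, aeval_monomial, ← Algebra.smul_def, ← Algebra.smul_def,
      Matrix.vecMul_smul, smul_mul_assoc, ← hpow, Finset.smul_sum]
    simp only [Pi.smul_apply, smul_assoc]

/-- Let `u : Fin n → K` satisfy the column eigenvector relation `Au = βu`, with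
components linearly independent over `ℤ`, and let `I` be the `ℤ`-span of the
components. Then for each `g ∈ ℤ[x]` the pairing `m ↦ ∑ mᵢuᵢ` induces an additive
isomorphism `ℤ^n/ℤ^n g(A) ≃ I/g(β)I` carrying the class of `mA` to the class of
`β·(∑ mᵢuᵢ)`; in particular it intertwines the action of `A` with multiplication
by `β`. -/
theorem bowenFranks_iso_ideal_quotient (K : Type*) [Field K] {n : ℕ} (hn : 1 ≤ n)
    (A : Matrix (Fin n) (Fin n) ℤ) (β : K) (u : Fin n → K)
    (hu : (A.map (Int.cast : ℤ → K)) *ᵥ u = β • u)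
    (huli : LinearIndependent ℤ u) :
    ∀ g : Polynomial ℤ,
      ∃ φ : ((Fin n → ℤ) ⧸ (rmul (Polynomial.aeval A g)).range) ≃+
          ((Submodule.span ℤ (Set.range u)) ⧸
            scaleSub (Polynomial.aeval β g) (Submodule.span ℤ (Set.range u))),
        (∀ (m : Fin n → ℤ) (h : (∑ i, m i • u i) ∈ Submodule.span ℤ (Set.range u)),
          φ (QuotientAddGroup.mk m) = QuotientAddGroup.mk ⟨∑ i, m i • u i, h⟩) ∧
        (∀ (m : Fin n → ℤ) (h : β * (∑ i, m i • u i) ∈ Submodule.span ℤ (Set.range u)),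
          φ (QuotientAddGroup.mk (m ᵥ* A)) = QuotientAddGroup.mk ⟨β * ∑ i, m i • u i, h⟩) := by
  intro g
  let e := (Module.Basis.span huli).equivFun.symm
  have he : ∀ m : Fin n → ℤ, (e m : K) = ∑ i, m i • u i := fun m => by
    simp [e, Module.Basis.equivFun_symm_apply, Module.Basis.span_apply]
  have hmap : (rmul (aeval A g)).range.map (e.toAddEquiv : (Fin n → ℤ) →+ _) =
      scaleSub (aeval β g) (Submodule.span ℤ (Set.range u)) := by
    ext x
    constructor
    · rintro ⟨_, ⟨m, rfl⟩, rfl⟩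
      refine ⟨e m, (e m).2, ?_⟩
      rw [he m, ← sum_vecMul_aeval hu]
      exact he _
    · rintro ⟨y, hy, hx⟩
      obtain ⟨m, hm⟩ := e.surjective ⟨y, hy⟩
      refine ⟨_, ⟨m, rfl⟩, Subtype.ext ((he _).trans ?_)⟩
      have hy' : y = ∑ i, m i • u i := by rw [← he, hm]
      rw [hx, hy']
      exact sum_vecMul_aeval hu g m
  refine ⟨QuotientAddGroup.congr _ _ e.toAddEquiv hmap, fun m h => ?_, fun m h => ?_⟩
  · exact congrArg QuotientAddGroup.mk (Subtype.ext (he m))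
  · exact congrArg QuotientAddGroup.mk (Subtype.ext ((he _).trans (sum_vecMul hu m)))
end

section
/- Let n ≥ 1 and let B be an n×n integer matrix whose characteristic polynomial is irreducible over ℚ. Then every additive subgroup S of ℤ^n that is invariant under the right action of B (i.e., mB ∈ S for all m ∈ S) is either the trivial subgroup {0} or has finite index in ℤ^n (i.e., the quotient ℤ^n/S is finite). -/
/-!
Fix a nonzero `m ∈ S`. The map `p ↦ m p(B)` from integer polynomials of degree `< n` to `S` is
injective: a nonzero `p` in its kernel would be coprime over `ℚ` to the irreducible characteristic
polynomial `χ` (which has degree `n`), so Bézout together with Cayley–Hamilton makes `p(B)`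
invertible over `ℚ`, forcing `m = 0`. Hence `S` has rank at least `n`, so full rank, and a
full-rank subgroup of `ℤ^n` has finite index.
-/

open Matrix Polynomial

/-- If `χ_B` is irreducible over `ℚ`, a nonzero integer polynomial in `B` of degree smaller than
the size of `B` kills no nonzero row vector. -/
theorem eq_zero_of_vecMul_aeval_eq_zero {n : ℕ} (B : Matrix (Fin n) (Fin n) ℤ)
    (hirr : Irreducible ((Matrix.charpoly B).map (Int.castRingHom ℚ)))
    {m : Fin n → ℤ} (hm : m ≠ 0) {p : ℤ[X]} (hdeg : p.degree < n)
    (hp : m ᵥ* aeval B p = 0) : p = 0 := by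
  by_contra hp0
  have hinj : Function.Injective (Int.castRingHom ℚ) := Int.cast_injective
  have hcop : IsCoprime (B.charpoly.map (Int.castRingHom ℚ)) (p.map (Int.castRingHom ℚ)) := by
    refine (hirr.coprime_iff_not_dvd).2 fun hdvd => ?_
    have h := degree_le_of_dvd hdvd ((Polynomial.map_ne_zero_iff hinj).2 hp0)
    rw [degree_map_eq_of_injective hinj, degree_map_eq_of_injective hinj,
      Matrix.charpoly_degree_eq_dim, Fintype.card_fin] at h
    exact absurd hdeg (not_lt.2 h)
  obtain ⟨u, v, huv⟩ := hcop
  set C : Matrix (Fin n) (Fin n) ℚ := B.map (Int.castRingHom ℚ) with hC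
  have hmap : ∀ q : ℤ[X], aeval C (q.map (Int.castRingHom ℚ)) =
      (aeval B q).map (Int.castRingHom ℚ) := by
    intro q
    have h := Polynomial.aeval_algHom_apply (R := ℤ)
      ((Int.castRingHom ℚ).mapMatrix (m := Fin n)).toIntAlgHom B q
    rw [← algebraMap_int_eq, aeval_map_algebraMap]
    exact h
  have hone : aeval C (p.map (Int.castRingHom ℚ)) * aeval C v = 1 := by
    have h := congrArg (aeval C) huv
    rw [map_add, map_mul, map_mul, hmap B.charpoly, Matrix.aeval_self_charpoly, map_one] at h
    rw [← map_mul, mul_comm, map_mul]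
    simpa using h
  have hmC : ((Int.castRingHom ℚ) ∘ m) ᵥ* aeval C (p.map (Int.castRingHom ℚ)) = 0 := by
    ext i
    rw [hmap, ← RingHom.map_vecMul, hp]
    simp
  apply hm
  have h0 : (Int.castRingHom ℚ) ∘ m = 0 := by
    rw [← Matrix.vecMul_one ((Int.castRingHom ℚ) ∘ m), ← hone, ← Matrix.vecMul_vecMul, hmC,
      Matrix.zero_vecMul]
  ext i
  exact hinj (by simpa using congrFun h0 i)

theorem vecMul_aeval_mem {n : ℕ} (B : Matrix (Fin n) (Fin n) ℤ)
    (S : AddSubgroup (Fin n → ℤ)) (hS : ∀ m ∈ S, m ᵥ* B ∈ S)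
    {m : Fin n → ℤ} (hm : m ∈ S) (p : ℤ[X]) : m ᵥ* aeval B p ∈ S := by
  induction p using Polynomial.induction_on' with
  | add p q hp hq =>
    rw [map_add, Matrix.vecMul_add]
    exact S.add_mem hp hq
  | monomial k a =>
    have hpow : m ᵥ* B ^ k ∈ S := by
      induction k with
      | zero => simpa using hm
      | succ k ih =>
        rw [pow_succ, ← Matrix.vecMul_vecMul]
        exact hS _ ih
    rw [aeval_monomial, ← Algebra.smul_def, Matrix.vecMul_smul]
    exact S.zsmul_mem hpow a

/-- If the characteristic polynomial of an `n×n` integer matrix `B` is irreducible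
over `ℚ`, then every additive subgroup of `ℤ^n` invariant under the right action of
`B` is either trivial or of finite index in `ℤ^n`. -/
theorem invariant_subgroup_bot_or_finite_index {n : ℕ} (hn : 1 ≤ n)
    (B : Matrix (Fin n) (Fin n) ℤ)
    (hirr : Irreducible ((Matrix.charpoly B).map (Int.castRingHom ℚ)))
    (S : AddSubgroup (Fin n → ℤ)) (hS : ∀ m ∈ S, m ᵥ* B ∈ S) :
    S = ⊥ ∨ Finite ((Fin n → ℤ) ⧸ S) := by
  refine or_iff_not_imp_left.2 fun hne => ?_
  obtain ⟨⟨m, hmS⟩, hm'⟩ := S.ne_bot_iff_exists_ne_zero.1 hne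
  have hm : m ≠ 0 := fun h => hm' (Subtype.ext h)
  let N : Submodule ℤ (Fin n → ℤ) := AddSubgroup.toIntSubmodule S
  let f : degreeLT ℤ n →ₗ[ℤ] N :=
    { toFun := fun p => ⟨m ᵥ* aeval B (p : ℤ[X]), vecMul_aeval_mem B S hS hmS _⟩
      map_add' := fun p q => Subtype.ext (by simp [Matrix.vecMul_add])
      map_smul' := fun a p => Subtype.ext (by
        simp only [Submodule.coe_smul, map_smul, Matrix.vecMul_smul, RingHom.id_apply]) }
  have hf : Function.Injective f := by
    refine (injective_iff_map_eq_zero f).2 fun p hp => Subtype.ext ?_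
    exact eq_zero_of_vecMul_aeval_eq_zero B hirr hm (mem_degreeLT.1 p.2) (congrArg Subtype.val hp)
  have hle : n ≤ Module.finrank ℤ N := by
    have h := LinearMap.finrank_le_finrank_of_injective hf
    rwa [(degreeLTEquiv ℤ n).finrank_eq, Module.finrank_fin_fun] at h
  have hfin : Finite ((Fin n → ℤ) ⧸ N) := by
    refine (Submodule.finiteQuotient_iff N).2 (le_antisymm (Submodule.finrank_le N) ?_)
    rwa [Module.finrank_fin_fun]
  exact hfin
end
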